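/- arXiv:2306.05498 — 2 statements merged into one kernel-verified Lean document; each statement's English description precedes it below -/
import Mathlib

section
/- Let (Θ, 𝒜, π) be a probability space (the prior over parameters), and let f : Θ × ℝ → [0,∞) be jointly measurable such that for every θ ∈ Θ the function z ↦ f(θ, z) is a probability density with respect to Lebesgue measure. Let g : ℝ → ℝ be a continuously differentiable, strictly increasing bijection with g'(y) > 0 for all y. Consider the hierarchical model: θ ∼ π, and given θ, Z₁, …, Zₙ are i.i.d. with density f(θ, ·); set Yᵢ = g⁻¹(Zᵢ). Then the joint law of (Y₁, …, Yₙ) is absolutely continuous with respect to Lebesgue measure on ℝⁿ with density p(y₁, …, yₙ) = ω(y | g) · ∏_{i=1}^n p_Y(yᵢ), where p_Y(t) = g'(t) ∫_Θ f(θ, g(t)) dπ(θ) is the marginal density of a single observation, and the correction factor is ω(y | g) = [∫_Θ ∏_{i=1}^n f(θ, g(yᵢ)) dπ(θ)] / [∏_{i=1}^n ∫_Θ f(θ, g(yᵢ)) dπ(θ)], at every point (y₁, …, yₙ) where each factor ∫_Θ f(θ, g(yᵢ)) dπ(θ) is positive and finite. -/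
open MeasureTheory ProbabilityTheory ENNReal

/-!
Conditionally on `θ`, the coordinates `Yᵢ = g⁻¹ (Zᵢ)` are independent, and the one-dimensional
change of variables gives each of them the density `t ↦ g'(t) f(θ, g t)`
(`map_invFun_withDensity`).  A product of measures with densities has the product density
(`pi_withDensity_prod`), so by Tonelli the mixture over `π` has density
`J y = (∫ ∏ᵢ f(θ, g yᵢ) dπ) ∏ᵢ g'(yᵢ)`; multiplying and dividing by the positive finite numbers
`∫ f(θ, g yᵢ) dπ` turns this into `ω y ∏ᵢ p_Y(yᵢ)`.

One point needs care: `∫ ∏ᵢ f(θ, g yᵢ) dπ` may be infinite even where all the one-dimensional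
integrals are finite, and `ω` then takes the value `0`.  Since `J` has total mass one, this happens
only on a null set, so the real-valued version of `J` is a density of the same law and satisfies the
factorization at every required point.
-/

/-- Tonelli for a product of functions of separate coordinates. -/
lemma lintegral_fin_prod {n : ℕ} (μ : Fin n → Measure ℝ) [∀ i, SigmaFinite (μ i)]
    (h : Fin n → ℝ → ℝ≥0∞) (hh : ∀ i, Measurable (h i)) :
    ∫⁻ x, ∏ i, h i (x i) ∂(Measure.pi μ) = ∏ i, ∫⁻ t, h i t ∂(μ i) := by
  induction n with
  | zero => simp
  | succ n ih =>
    rw [← (measurePreserving_piFinSuccAbove μ 0).symm.lintegral_comp_emb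
      (MeasurableEquiv.measurableEmbedding _)]
    simp_rw [MeasurableEquiv.piFinSuccAbove_symm_apply, Fin.insertNthEquiv,
      Fin.prod_univ_succ, Fin.insertNth_zero]
    simp only [Fin.zero_succAbove, Equiv.coe_fn_mk, Fin.cons_zero, Fin.cons_succ, cast_eq]
    have hm : Measurable fun x : Fin n → ℝ => ∏ j, h (Fin.succ j) (x j) :=
      Finset.measurable_fun_prod _ fun j _ => (hh _).comp (measurable_pi_apply j)
    rw [lintegral_prod_mul (f := h 0) (hh 0).aemeasurable hm.aemeasurable,
      ih (fun j => μ j.succ) (fun j => h j.succ) fun j => hh _]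

lemma pi_withDensity_prod {n : ℕ} (h : Fin n → ℝ → ℝ≥0∞) (hh : ∀ i, Measurable (h i))
    [∀ i, SigmaFinite ((volume : Measure ℝ).withDensity (h i))] :
    Measure.pi (fun i => (volume : Measure ℝ).withDensity (h i)) =
      (volume : Measure (Fin n → ℝ)).withDensity fun y => ∏ i, h i (y i) := by
  refine Measure.pi_eq fun s hs => ?_
  rw [withDensity_apply _ (MeasurableSet.univ_pi hs), volume_pi, Measure.restrict_pi_pi,
    lintegral_fin_prod _ h hh]
  exact Finset.prod_congr rfl fun i _ => (withDensity_apply _ (hs i)).symm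

lemma invFun_preimage_eq_image {g : ℝ → ℝ} (hg : Function.Bijective g) (s : Set ℝ) :
    Function.invFun g ⁻¹' s = g '' s := by
  refine (Set.image_eq_preimage_of_inverse (Function.leftInverse_invFun hg.1)
    (Function.rightInverse_invFun hg.2) ▸ rfl)

lemma measurable_invFun_of_continuous {g : ℝ → ℝ} (hc : Continuous g)
    (hg : Function.Bijective g) : Measurable (Function.invFun g) := by
  intro s hs
  rw [invFun_preimage_eq_image hg]
  exact (hc.measurableEmbedding hg.1).measurableSet_image' hs

/-- The one-dimensional change of variables: if `Z` has density `h`, then `g⁻¹ (Z)` has density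
`g' · (h ∘ g)`. -/
lemma map_invFun_withDensity {g : ℝ → ℝ} (hd : ContDiff ℝ 1 g) (hg : Function.Bijective g)
    (hpos : ∀ t, 0 < deriv g t) (h : ℝ → ℝ≥0∞) :
    ((volume : Measure ℝ).withDensity h).map (Function.invFun g) =
      (volume : Measure ℝ).withDensity fun t => ENNReal.ofReal (deriv g t) * h (g t) := by
  ext s hs
  rw [Measure.map_apply (measurable_invFun_of_continuous hd.continuous hg) hs,
    invFun_preimage_eq_image hg,
    withDensity_apply _ ((hd.continuous.measurableEmbedding hg.1).measurableSet_image' hs),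
    withDensity_apply _ hs,
    lintegral_image_eq_lintegral_abs_deriv_mul hs
      (fun x _ => ((hd.differentiable one_ne_zero) x).hasDerivAt.hasDerivWithinAt) hg.1.injOn]
  simp_rw [abs_of_pos (hpos _)]

/-- **Theorem 1 of the paper.** Under the hierarchical model `θ ∼ π`,
`Z₁,…,Zₙ | θ` i.i.d. with density `f θ ·`, and `Yᵢ = g⁻¹(Zᵢ)` for a `C¹` strictly increasing
bijection `g` with positive derivative, the joint law of `(Y₁,…,Yₙ)` is absolutely continuous
with respect to Lebesgue measure on `ℝⁿ`, with a density that factorizes as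
`ω(y | g) ∏ᵢ p_Y(yᵢ)` at every point `y` where each factor `∫ f(θ, g(yᵢ)) dπ(θ)` is positive
and finite, where `p_Y(t) = g'(t) ∫ f(θ, g(t)) dπ(θ)` and
`ω(y | g) = ∫ ∏ᵢ f(θ, g(yᵢ)) dπ(θ) / ∏ᵢ ∫ f(θ, g(yᵢ)) dπ(θ)`. -/
theorem joint_density_factorization_correction_factor
    {Θ : Type*} [MeasurableSpace Θ] (π : Measure Θ) [IsProbabilityMeasure π]
    (n : ℕ) (f : Θ → ℝ → ℝ)
    (hf_meas : Measurable (Function.uncurry f))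
    (hf_nonneg : ∀ θ z, 0 ≤ f θ z)
    (hf_dens : ∀ θ, ∫ z : ℝ, f θ z = 1)
    (g : ℝ → ℝ) (hg_smooth : ContDiff ℝ 1 g) (hg_mono : StrictMono g)
    (hg_bij : Function.Bijective g) (hg_deriv : ∀ t : ℝ, 0 < deriv g t)
    -- the conditional law of `(Z₁,…,Zₙ)` given `θ`: i.i.d. with density `f θ ·`
    (κ : Kernel Θ (Fin n → ℝ)) [IsSFiniteKernel κ]
    (hκ : ∀ θ, κ θ =
      Measure.pi fun _ : Fin n => volume.withDensity fun z => ENNReal.ofReal (f θ z))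
    -- the joint law of `(Y₁,…,Yₙ)`, `Yᵢ = g⁻¹ (Zᵢ)`
    (μY : Measure (Fin n → ℝ))
    (hμY : μY = (π ⊗ₘ κ).map fun p => fun i => Function.invFun g (p.2 i))
    -- the marginal density of a single observation
    (pY : ℝ → ℝ)
    (hpY : ∀ t : ℝ, pY t = deriv g t * (∫⁻ θ, ENNReal.ofReal (f θ (g t)) ∂π).toReal)
    -- the correction factor
    (ω : (Fin n → ℝ) → ℝ)
    (hω : ∀ y : Fin n → ℝ, ω y =
      (∫⁻ θ, ENNReal.ofReal (∏ i, f θ (g (y i))) ∂π).toReal /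
        ∏ i, (∫⁻ θ, ENNReal.ofReal (f θ (g (y i))) ∂π).toReal) :
    μY ≪ (volume : Measure (Fin n → ℝ)) ∧
    ∃ dens : (Fin n → ℝ) → ℝ≥0∞,
      μY = volume.withDensity dens ∧
      ∀ y : Fin n → ℝ,
        (∀ i, 0 < ∫⁻ θ, ENNReal.ofReal (f θ (g (y i))) ∂π) →
        (∀ i, (∫⁻ θ, ENNReal.ofReal (f θ (g (y i))) ∂π) < ⊤) →
        dens y = ENNReal.ofReal (ω y * ∏ i, pY (y i)) := by
  have hprob : ∀ θ, IsProbabilityMeasure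
      ((volume : Measure ℝ).withDensity fun z => ENNReal.ofReal (f θ z)) := by
    intro θ
    refine ⟨?_⟩
    have hint : Integrable (f θ) := by
      by_contra hn
      have := hf_dens θ
      rw [integral_undef hn] at this
      exact zero_ne_one this
    rw [withDensity_apply _ MeasurableSet.univ, Measure.restrict_univ,
      ← ofReal_integral_eq_lintegral_ofReal hint (Filter.Eventually.of_forall (hf_nonneg θ)),
      hf_dens, ENNReal.ofReal_one]
  have hmarkov : IsMarkovKernel κ := ⟨fun θ => by rw [hκ]; infer_instance⟩
  have hinv := measurable_invFun_of_continuous hg_smooth.continuous hg_bij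
  have hG : Measurable fun z : Fin n → ℝ => fun i => Function.invFun g (z i) :=
    measurable_pi_lambda _ fun i => hinv.comp (measurable_pi_apply i)
  have hG2 : Measurable fun p : Θ × (Fin n → ℝ) => fun i => Function.invFun g (p.2 i) :=
    hG.comp measurable_snd
  have hgm : Measurable g := hg_smooth.continuous.measurable
  have hfθ : ∀ θ, Measurable (f θ) := fun θ => hf_meas.comp measurable_prodMk_left
  have hdm : Measurable (deriv g) := measurable_deriv g
  -- the conditional law of `Y` given `θ`
  have hcond : ∀ θ, (κ θ).map (fun z : Fin n → ℝ => fun i => Function.invFun g (z i)) =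
      (volume : Measure (Fin n → ℝ)).withDensity fun y =>
        ∏ i, (ENNReal.ofReal (deriv g (y i)) * ENNReal.ofReal (f θ (g (y i)))) := by
    intro θ
    have hp : IsProbabilityMeasure
        (((volume : Measure ℝ).withDensity fun z => ENNReal.ofReal (f θ z)).map
          (Function.invFun g)) := Measure.isProbabilityMeasure_map hinv.aemeasurable
    have hmap := map_invFun_withDensity hg_smooth hg_bij hg_deriv
      (fun z => ENNReal.ofReal (f θ z))
    rw [hκ, Measure.pi_map_pi (fun _ => hinv.aemeasurable)]
    rw [hmap] at hp ⊢
    exact pi_withDensity_prod (fun _ t => ENNReal.ofReal (deriv g t) * ENNReal.ofReal (f θ (g t)))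
      fun _ => hdm.ennreal_ofReal.mul ((hfθ θ).comp hgm).ennreal_ofReal
  have hfac : ∀ i : Fin n, Measurable fun p : Θ × (Fin n → ℝ) => f p.1 (g (p.2 i)) := fun i =>
    hf_meas.comp (measurable_fst.prodMk
      (hgm.comp ((measurable_pi_apply i).comp measurable_snd)))
  have hjoint : Measurable fun p : Θ × (Fin n → ℝ) => ENNReal.ofReal (∏ i, f p.1 (g (p.2 i))) :=
    (Finset.measurable_fun_prod _ fun i _ => hfac i).ennreal_ofReal
  set J₀ : (Fin n → ℝ) → ℝ≥0∞ := fun y => ∫⁻ θ, ENNReal.ofReal (∏ i, f θ (g (y i))) ∂π with hJ₀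
  have hJ₀m : Measurable J₀ := hjoint.lintegral_prod_left'
  have hDm : Measurable fun y : Fin n → ℝ => ENNReal.ofReal (∏ i, deriv g (y i)) :=
    (Finset.measurable_fun_prod _ fun i _ => hdm.comp (measurable_pi_apply i)).ennreal_ofReal
  have hDpos : ∀ y : Fin n → ℝ, 0 < ∏ i, deriv g (y i) := fun y =>
    Finset.prod_pos fun i _ => hg_deriv _
  have hsplit : ∀ θ (y : Fin n → ℝ),
      ∏ i, (ENNReal.ofReal (deriv g (y i)) * ENNReal.ofReal (f θ (g (y i)))) =
        ENNReal.ofReal (∏ i, deriv g (y i)) * ENNReal.ofReal (∏ i, f θ (g (y i))) := by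
    intro θ y
    rw [Finset.prod_mul_distrib, ENNReal.ofReal_prod_of_nonneg fun i _ => (hg_deriv _).le,
      ENNReal.ofReal_prod_of_nonneg fun i _ => hf_nonneg _ _]
  have hlaw : μY = (volume : Measure (Fin n → ℝ)).withDensity fun y =>
      ENNReal.ofReal (∏ i, deriv g (y i)) * J₀ y := by
    ext s hs
    rw [hμY, Measure.map_apply hG2 hs, Measure.compProd_apply (hG2 hs), withDensity_apply _ hs]
    have h1 : ∀ θ, κ θ (Prod.mk θ ⁻¹'
        ((fun p : Θ × (Fin n → ℝ) => fun i => Function.invFun g (p.2 i)) ⁻¹' s)) =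
        ∫⁻ y in s, ENNReal.ofReal (∏ i, deriv g (y i)) *
          ENNReal.ofReal (∏ i, f θ (g (y i))) := by
      intro θ
      have h2 := congrArg (fun m => m s) (hcond θ)
      simp only [Measure.map_apply hG hs, withDensity_apply _ hs, hsplit] at h2
      exact h2
    simp_rw [h1]
    rw [lintegral_lintegral_swap ((hDm.comp measurable_snd).mul hjoint).aemeasurable]
    refine lintegral_congr fun y => ?_
    exact lintegral_const_mul _ (hjoint.comp measurable_prodMk_right)
  have hfin : ∀ᵐ y : Fin n → ℝ, ENNReal.ofReal (∏ i, deriv g (y i)) * J₀ y < ⊤ := by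
    refine ae_lt_top (hDm.mul hJ₀m) ?_
    have hp : IsProbabilityMeasure μY := by
      rw [hμY]; exact Measure.isProbabilityMeasure_map hG2.aemeasurable
    have h1 : μY Set.univ = 1 := measure_univ
    rw [hlaw, withDensity_apply _ MeasurableSet.univ, Measure.restrict_univ] at h1
    rw [h1]; exact ENNReal.one_ne_top
  refine ⟨hlaw ▸ withDensity_absolutelyContinuous _ _,
    fun y => ENNReal.ofReal ((∏ i, deriv g (y i)) * (J₀ y).toReal), ?_, ?_⟩
  · rw [hlaw]
    refine withDensity_congr_ae ?_
    filter_upwards [hfin] with y hy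
    -- the Jacobian factor is nonzero, so finiteness of the product forces `J₀ y` to be finite
    have hJ : J₀ y ≠ ⊤ := by
      intro h
      rw [h, ENNReal.mul_top (ENNReal.ofReal_pos.2 (hDpos y)).ne'] at hy
      exact lt_irrefl _ hy
    rw [ENNReal.ofReal_mul (hDpos y).le, ENNReal.ofReal_toReal hJ]
  · intro y hpos hlt
    have hF : ∏ i, (∫⁻ θ, ENNReal.ofReal (f θ (g (y i))) ∂π).toReal ≠ 0 :=
      Finset.prod_ne_zero_iff.2 fun i _ => (ENNReal.toReal_pos (hpos i).ne' (hlt i).ne).ne'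
    simp only [hω, hpY, Finset.prod_mul_distrib]
    congr 1
    rw [div_mul_eq_mul_div, eq_div_iff hF]
    ring
end

section
/- Let F_{Y,n}, F_{Y,0} : ℝ → [0,1] be nondecreasing with F_{Y,n}(t) → F_{Y,0}(t) for every t ∈ ℝ, and let F_{Z,n}, F_{Z,0} : ℝ → [0,1] be nondecreasing with F_{Z,n}(s) → F_{Z,0}(s) for every s ∈ ℝ, where F_{Z,0} is continuous and strictly increasing with infimum 0 and supremum 1. Define Ỹ = {t ∈ ℝ : 0 < F_{Y,0}(t) < 1}, g_n(t) = inf{s ∈ ℝ : F_{Z,n}(s) ≥ F_{Y,n}(t)}, and g₀(t) = F_{Z,0}⁻¹(F_{Y,0}(t)). Then: (i) for every t ∈ Ỹ, g_n(t) is a finite real number for all sufficiently large n and g_n(t) → g₀(t); and (ii) if in addition F_{Y,0} is continuous, then for every compact set K ⊆ Ỹ, sup_{t ∈ K} |g_n(t) − g₀(t)| → 0. -/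
open Filter

/-!
If `FZn n a < FYn n t ≤ FZn n b`, monotonicity of `FZn n` traps the generalized inverse `gn n t`
in `[a, b]` (`sInf_mem_Icc_of_bracket`). Since `FZ0` is strictly increasing,
`FZ0 (g0 t - δ) < FY0 t < FZ0 (g0 t + δ)`, and both strict inequalities pass to large `n` by
pointwise convergence at the two points `g0 t ± δ`; this is the pointwise claim.

For the uniform claim, continuity of `FY0` gives `t₁ < t₀ < t₂` with
`FZ0 (g0 t₀ - δ) < FY0 t₁` and `FY0 t₂ < FZ0 (g0 t₀ + δ)`. By monotonicity of `FYn n`, convergence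
at `t₁`, `t₂`, `g0 t₀ ± δ` alone brackets `gn n t` for all `t ∈ [t₁, t₂]` at once, so convergence
is uniform near `t₀`, and compactness turns this into uniformity on `K`.
-/

/-- A monotone `F` crossing the level `p` between `a` and `b` has its generalized inverse at `p`
well defined and lying in `[a, b]`. -/
lemma sInf_mem_Icc_of_bracket {F : ℝ → ℝ} (hF : Monotone F) {p a b : ℝ}
    (ha : F a < p) (hb : p ≤ F b) :
    {s : ℝ | p ≤ F s}.Nonempty ∧ BddBelow {s : ℝ | p ≤ F s} ∧
      sInf {s : ℝ | p ≤ F s} ∈ Set.Icc a b := by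
  have hlow : a ∈ lowerBounds {s : ℝ | p ≤ F s} := fun s hs =>
    (hF.reflect_lt (lt_of_lt_of_le ha hs)).le
  exact ⟨⟨b, hb⟩, ⟨a, hlow⟩, le_csInf ⟨b, hb⟩ hlow, csInf_le ⟨a, hlow⟩ hb⟩

/-- **deterministic core of Theorem 2 of the paper.** If the nondecreasing
`F_{Y,n} → F_{Y,0}` and `F_{Z,n} → F_{Z,0}` pointwise, where `F_{Z,0}` is continuous and
strictly increasing with infimum `0` and supremum `1`, then on
`Ỹ = {t : 0 < F_{Y,0}(t) < 1}` the generalized-inverse transformations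
`gₙ(t) = inf{s : F_{Z,n}(s) ≥ F_{Y,n}(t)}` are eventually finite and converge pointwise to
`g₀ = F_{Z,0}⁻¹ ∘ F_{Y,0}`; if moreover `F_{Y,0}` is continuous, the convergence is uniform
on every compact subset of `Ỹ`. -/
theorem transformation_consistency
    (FYn : ℕ → ℝ → ℝ) (FY0 : ℝ → ℝ)
    (hFYn_mono : ∀ n, Monotone (FYn n)) (hFY0_mono : Monotone FY0)
    (hFYn_range : ∀ n, ∀ t : ℝ, FYn n t ∈ Set.Icc (0 : ℝ) 1)
    (hFY0_range : ∀ t : ℝ, FY0 t ∈ Set.Icc (0 : ℝ) 1)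
    (hFY_conv : ∀ t : ℝ, Tendsto (fun n => FYn n t) atTop (nhds (FY0 t)))
    (FZn : ℕ → ℝ → ℝ) (FZ0 : ℝ → ℝ)
    (hFZn_mono : ∀ n, Monotone (FZn n))
    (hFZn_range : ∀ n, ∀ s : ℝ, FZn n s ∈ Set.Icc (0 : ℝ) 1)
    (hFZ0_cont : Continuous FZ0) (hFZ0_mono : StrictMono FZ0)
    (hFZ0_inf : (⨅ s : ℝ, FZ0 s) = 0) (hFZ0_sup : (⨆ s : ℝ, FZ0 s) = 1)
    (hFZ0_range : ∀ s : ℝ, FZ0 s ∈ Set.Icc (0 : ℝ) 1)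
    (hFZ_conv : ∀ s : ℝ, Tendsto (fun n => FZn n s) atTop (nhds (FZ0 s)))
    (Ytil : Set ℝ) (hYtil : Ytil = {t : ℝ | 0 < FY0 t ∧ FY0 t < 1})
    (gn : ℕ → ℝ → ℝ)
    (hgn : ∀ n, ∀ t : ℝ, gn n t = sInf {s : ℝ | FYn n t ≤ FZn n s})
    (g0 : ℝ → ℝ) (hg0 : ∀ t ∈ Ytil, FZ0 (g0 t) = FY0 t) :
    (∀ t ∈ Ytil,
      (∃ N : ℕ, ∀ n ≥ N,
        ({s : ℝ | FYn n t ≤ FZn n s}).Nonempty ∧ BddBelow {s : ℝ | FYn n t ≤ FZn n s}) ∧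
      Tendsto (fun n => gn n t) atTop (nhds (g0 t))) ∧
    (Continuous FY0 →
      ∀ K : Set ℝ, IsCompact K → K ⊆ Ytil →
        ∀ ε > (0 : ℝ), ∃ N : ℕ, ∀ n ≥ N, ∀ t ∈ K, |gn n t - g0 t| < ε) := by
  have hbr : ∀ t ∈ Ytil, ∀ δ > (0 : ℝ),
      FZ0 (g0 t - δ) < FY0 t ∧ FY0 t < FZ0 (g0 t + δ) := by
    intro t ht δ hδ
    rw [← hg0 t ht]
    exact ⟨hFZ0_mono (by linarith), hFZ0_mono (by linarith)⟩
  refine ⟨fun t ht => ?_, ?_⟩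
  · have key : ∀ δ > (0 : ℝ), ∀ᶠ n in atTop,
        FZn n (g0 t - δ) < FYn n t ∧ FYn n t < FZn n (g0 t + δ) := fun δ hδ =>
      ((hFZ_conv _).eventually_lt (hFY_conv t) (hbr t ht δ hδ).1).and
        ((hFY_conv t).eventually_lt (hFZ_conv _) (hbr t ht δ hδ).2)
    constructor
    · obtain ⟨N, hN⟩ := eventually_atTop.1 (key 1 one_pos)
      refine ⟨N, fun n hn => ?_⟩
      have h := sInf_mem_Icc_of_bracket (hFZn_mono n) (hN n hn).1 (hN n hn).2.le
      exact ⟨h.1, h.2.1⟩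
    · rw [Metric.tendsto_nhds]
      intro ε hε
      filter_upwards [key (ε / 2) (half_pos hε)] with n hn
      have h := (sInf_mem_Icc_of_bracket (hFZn_mono n) hn.1 hn.2.le).2.2
      rw [← hgn n t] at h
      rw [Real.dist_eq, abs_lt]
      constructor <;> linarith [h.1, h.2]
  · intro hcont K hK hKY ε hε
    suffices h : ∀ᶠ n in atTop, ∀ t ∈ K, t ∈ Ytil → |gn n t - g0 t| < ε by
      obtain ⟨N, hN⟩ := eventually_atTop.1 h
      exact ⟨N, fun n hn t ht => hN n hn t ht (hKY ht)⟩
    refine hK.induction_on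
      (p := fun s => ∀ᶠ n in atTop, ∀ t ∈ s, t ∈ Ytil → |gn n t - g0 t| < ε) ?_ ?_ ?_ ?_
    · simp
    · exact fun s u hsu hu => hu.mono fun n h t ht => h t (hsu ht)
    · intro s u hs hu
      filter_upwards [hs, hu] with n h₁ h₂ t ht
      exact ht.elim (h₁ t) (h₂ t)
    · intro t₀ ht₀
      -- `gn n t` and `g0 t` will both lie in an interval of length `2 * (ε / 3) < ε`.
      obtain ⟨hlo, hhi⟩ := hbr t₀ (hKY ht₀) (ε / 3) (by positivity)
      have hnear : {t | FZ0 (g0 t₀ - ε / 3) < FY0 t ∧ FY0 t < FZ0 (g0 t₀ + ε / 3)} ∈ nhds t₀ :=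
        (hcont.continuousAt.eventually (lt_mem_nhds hlo)).and
          (hcont.continuousAt.eventually (gt_mem_nhds hhi))
      obtain ⟨r, hr, hball⟩ := Metric.nhds_basis_closedBall.mem_iff.1 hnear
      rw [Real.closedBall_eq_Icc] at hball
      have h₁ := (hball (Set.left_mem_Icc.2 (by linarith))).1
      have h₂ := (hball (Set.right_mem_Icc.2 (by linarith))).2
      refine ⟨Set.Icc (t₀ - r) (t₀ + r),
        mem_nhdsWithin_of_mem_nhds (Icc_mem_nhds (by linarith) (by linarith)), ?_⟩
      filter_upwards [(hFZ_conv _).eventually_lt (hFY_conv _) h₁,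
        (hFY_conv _).eventually_lt (hFZ_conv _) h₂] with n hn₁ hn₂ t ht htY
      have h := (sInf_mem_Icc_of_bracket (hFZn_mono n)
        (hn₁.trans_le (hFYn_mono n ht.1)) ((hFYn_mono n ht.2).trans hn₂.le)).2.2
      rw [← hgn n t] at h
      obtain ⟨hb₁, hb₂⟩ := hball ht
      rw [← hg0 t htY, hFZ0_mono.lt_iff_lt] at hb₁ hb₂
      rw [abs_lt]
      constructor <;> linarith [h.1, h.2]
end
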